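/- arXiv:2406.09049 — 3 statements merged into one kernel-verified Lean document; each statement's English description precedes it below -/
import Mathlib

section
/- Let G be a complete bow-free acyclic path diagram on a finite vertex type V, i.e. a BAP in which every pair of distinct vertices is adjacent (adj_G(v,w) holds for all v ≠ w). Then the algebraic model is all symmetric matrices: A(G) = {Σ : Matrix V V ℝ | Σᵀ = Σ}. Equivalently, G imposes no algebraic constraints beyond symmetry: every polynomial in MvPolynomial (V × V) ℝ that vanishes on M(G) vanishes on all symmetric real matrices. (The claim in Example 3 that complete BAPs impose no algebraic constraints.) -/
open Matrix

structure MixedGraph (V : Type*) where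
  D : V → V → Prop
  B : V → V → Prop
  symm : ∀ v w, B v w → B w v
  irrefl : ∀ v, ¬ B v v

namespace MixedGraph

variable {V : Type*}

/-- The graph is acyclic: no directed cycles. -/
def Acyclic (G : MixedGraph V) : Prop := ∀ v, ¬ Relation.TransGen G.D v v

/-- The graph is simple: for distinct `v, w`, at most one of
`D v w`, `D w v`, `B v w` holds. -/
def Simple (G : MixedGraph V) : Prop :=
  ∀ v w, v ≠ w →
    ¬ (G.D v w ∧ G.D w v) ∧ ¬ (G.D v w ∧ G.B v w) ∧ ¬ (G.D w v ∧ G.B v w)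

/-- A bow-free acyclic path diagram: a simple acyclic mixed graph. -/
def IsBAP (G : MixedGraph V) : Prop := G.Acyclic ∧ G.Simple

/-- `Λ` is compatible with `G`. -/
def LamCompat (G : MixedGraph V) (Λ : Matrix V V ℝ) : Prop :=
  ∀ v w, ¬ G.D v w → Λ v w = 0

/-- `Ω` is compatible with `G`. -/
def OmCompat [Fintype V] (G : MixedGraph V) (Ω : Matrix V V ℝ) : Prop :=
  Ω.PosDef ∧ ∀ v w, v ≠ w → ¬ G.B v w → ¬ G.B w v → Ω v w = 0

/-- The model `M(G)` of a mixed graph. -/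
def model [Fintype V] [DecidableEq V] (G : MixedGraph V) : Set (Matrix V V ℝ) :=
  {S | ∃ Λ Ω : Matrix V V ℝ, G.LamCompat Λ ∧ G.OmCompat Ω ∧
    S = ((1 - Λ)⁻¹)ᵀ * Ω * (1 - Λ)⁻¹}

/-- The algebraic model `A(G)`: the real Zariski closure of `M(G)`. -/
def algModel [Fintype V] [DecidableEq V] (G : MixedGraph V) : Set (Matrix V V ℝ) :=
  {S | ∀ p : MvPolynomial (V × V) ℝ,
    (∀ T ∈ G.model, MvPolynomial.eval (fun e => T e.1 e.2) p = 0) →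
    MvPolynomial.eval (fun e => S e.1 e.2) p = 0}

/-- The skeleton (adjacency relation) of `G`. -/
def adj (G : MixedGraph V) (v w : V) : Prop :=
  v ≠ w ∧ (G.D v w ∨ G.D w v ∨ G.B v w)

/-- A collider triple of `G`. -/
def ColliderTriple (G : MixedGraph V) (u v w : V) : Prop :=
  u ≠ v ∧ v ≠ w ∧ u ≠ w ∧ (G.D u v ∨ G.B u v) ∧ (G.D w v ∨ G.B w v)

/-- A v-structure of `G`. -/
def VStructure (G : MixedGraph V) (u v w : V) : Prop :=
  G.ColliderTriple u v w ∧ ¬ G.adj u w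

end MixedGraph

open Filter Topology

/-- Symmetric real matrices close enough to the identity are positive definite. -/
theorem Matrix.eventually_posDef_nhds_one {V : Type*} [Fintype V] [DecidableEq V] :
    ∀ᶠ A : Matrix V V ℝ in 𝓝 1, A.IsHermitian → A.PosDef := by
  have hε : (0 : ℝ) < 1 / (Fintype.card V + 1) := by positivity
  have hclose : ∀ᶠ A : Matrix V V ℝ in 𝓝 1, ∀ i j,
      |A i j - (1 : Matrix V V ℝ) i j| < 1 / (Fintype.card V + 1) := by
    refine eventually_all.2 fun i => eventually_all.2 fun j => ?_
    have hcont : Continuous fun A : Matrix V V ℝ => |A i j - (1 : Matrix V V ℝ) i j| :=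
      ((continuous_id.matrix_elem i j).sub continuous_const).abs
    exact hcont.continuousAt.eventually_lt continuousAt_const (by simpa using hε)
  filter_upwards [hclose] with A hA hherm
  refine .of_dotProduct_mulVec_pos hherm fun x hx => ?_
  have hxx : 0 < ∑ i, x i ^ 2 := by
    obtain ⟨i, hi⟩ := Function.ne_iff.1 hx
    exact Finset.sum_pos' (fun i _ => sq_nonneg (x i))
      ⟨i, Finset.mem_univ i, by simpa using sq_pos_of_ne_zero hi⟩
  have hsplit : star x ⬝ᵥ (A *ᵥ x) =
      ∑ i, x i ^ 2 + ∑ i, ∑ j, x i * (A i j - (1 : Matrix V V ℝ) i j) * x j := by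
    have hone : ∑ i, x i ^ 2 = star x ⬝ᵥ ((1 : Matrix V V ℝ) *ᵥ x) := by
      simp [dotProduct, sq]
    have hdiff : ∑ i, ∑ j, x i * (A i j - (1 : Matrix V V ℝ) i j) * x j =
        star x ⬝ᵥ ((A - 1) *ᵥ x) := by
      simp [dotProduct, mulVec, Finset.mul_sum, mul_assoc]
    rw [hone, hdiff, ← dotProduct_add, ← add_mulVec, add_sub_cancel]
  have hbound : ∀ i j, -(1 / (Fintype.card V + 1) * ((x i ^ 2 + x j ^ 2) / 2)) ≤
      x i * (A i j - (1 : Matrix V V ℝ) i j) * x j := fun i j => by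
    have habs : |x i * (A i j - (1 : Matrix V V ℝ) i j) * x j| ≤
        1 / (Fintype.card V + 1) * ((x i ^ 2 + x j ^ 2) / 2) := by
      calc |x i * (A i j - (1 : Matrix V V ℝ) i j) * x j|
          = |A i j - (1 : Matrix V V ℝ) i j| * (|x i| * |x j|) := by
            rw [abs_mul, abs_mul]; ring
        _ ≤ _ := by
            gcongr
            · exact (hA i j).le
            · nlinarith [sq_nonneg (|x i| - |x j|), sq_abs (x i), sq_abs (x j)]
    exact neg_le_of_abs_le habs
  have hsum : ∑ i, ∑ j, -(1 / (Fintype.card V + 1 : ℝ) * ((x i ^ 2 + x j ^ 2) / 2)) =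
      -(Fintype.card V / (Fintype.card V + 1) * ∑ i, x i ^ 2) := by
    simp only [Finset.sum_neg_distrib, ← Finset.mul_sum, ← Finset.sum_div,
      Finset.sum_add_distrib, Finset.sum_const, Finset.card_univ, nsmul_eq_mul]
    ring
  have hlower := Finset.sum_le_sum fun i (_ : i ∈ Finset.univ) =>
    Finset.sum_le_sum fun j (_ : j ∈ Finset.univ) => hbound i j
  rw [hsum] at hlower
  have hlt : (Fintype.card V / (Fintype.card V + 1) : ℝ) < 1 :=
    (div_lt_one (by positivity)).2 (by linarith)
  rw [hsplit]
  nlinarith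

/-- A map of the form `τ (1 - L M)⁻¹ * O M * (1 - L M)⁻¹ + K M` with `τ`, `L`, `O`, `K` linear is
open at any point where `L` vanishes and `O` is `1`, provided its linearization is injective. -/
theorem map_nhds_inverse_mul_mul_inverse {A : Type*} [NormedRing A] [NormedAlgebra ℝ A]
    [FiniteDimensional ℝ A] (τ L O K : A →ₗ[ℝ] A) (X : A) (hτ : τ 1 = 1) (hL : L X = 0)
    (hO : O X = 1) (hinj : ∀ M, L M + τ (L M) + O M + K M = 0 → M = 0) :
    map (fun M => τ (Ring.inverse (1 - L M)) * O M * Ring.inverse (1 - L M) + K M) (𝓝 X) =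
      𝓝 (1 + K X) := by
  have : CompleteSpace A := FiniteDimensional.complete ℝ A
  let τ' := τ.toContinuousLinearMap
  let L' := L.toContinuousLinearMap
  let O' := O.toContinuousLinearMap
  let K' := K.toContinuousLinearMap
  have hinv : HasStrictFDerivAt (fun M => Ring.inverse (1 - L M)) L' X := by
    have hsub : HasStrictFDerivAt (fun M => 1 - L M) (-L') X :=
      L'.hasStrictFDerivAt.const_sub 1
    have hone : HasStrictFDerivAt Ring.inverse
        (-ContinuousLinearMap.mulLeftRight ℝ A 1 1) (1 - L X) := by
      simpa [hL] using hasStrictFDerivAt_ringInverse (𝕜 := ℝ) (1 : Aˣ)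
    convert! hone.comp X hsub using 1
    ext1 M
    simp
  have hder : HasStrictFDerivAt
      (fun M => τ (Ring.inverse (1 - L M)) * O M * Ring.inverse (1 - L M) + K M)
      (L' + τ'.comp L' + O' + K') X := by
    have hfull := ((((τ'.hasStrictFDerivAt (x := Ring.inverse (1 - L X))).comp X hinv).fun_mul'
      (O'.hasStrictFDerivAt (x := X))).fun_mul' hinv).add (K'.hasStrictFDerivAt (x := X))
    convert! hfull using 1
    ext1 M
    have hO' : O' X = 1 := hO
    have hτ' : τ' 1 = 1 := hτ
    simp [hL, hO', hτ']
    abel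
  have hker : Function.Injective (L' + τ'.comp L' + O' + K') :=
    (injective_iff_map_eq_zero _).2 fun M hM => hinj M hM
  have hrange : (L' + τ'.comp L' + O' + K').range = ⊤ :=
    LinearMap.range_eq_top.2 (LinearMap.injective_iff_surjective.1 hker)
  simpa [hL, hO, hτ] using hder.map_nhds_eq_of_surj hrange

section Parametrization

attribute [local instance] Matrix.linftyOpNormedRing Matrix.linftyOpNormedAlgebra

theorem Matrix.map_nhds_transpose_inv_mul_mul_inv {V : Type*} [Fintype V] [DecidableEq V]
    (L O K : Matrix V V ℝ →ₗ[ℝ] Matrix V V ℝ) (X : Matrix V V ℝ) (hL : L X = 0) (hO : O X = 1)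
    (hinj : ∀ M, L M + (L M)ᵀ + O M + K M = 0 → M = 0) :
    Filter.map (fun M => ((1 - L M)⁻¹)ᵀ * O M * (1 - L M)⁻¹ + K M) (𝓝 X) = 𝓝 (1 + K X) := by
  simp only [nonsing_inv_eq_ringInverse]
  exact map_nhds_inverse_mul_mul_inverse (transposeLinearEquiv V V ℝ ℝ).toLinearMap L O K X
    transpose_one hL hO hinj

end Parametrization

/-- The linear projection of matrices keeping only the entries selected by `P`. -/
noncomputable def Matrix.mask {V : Type*} (P : V → V → Prop) :
    Matrix V V ℝ →ₗ[ℝ] Matrix V V ℝ :=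
  open Classical in
  { toFun := fun M => of fun v w => if P v w then M v w else 0
    map_add' := fun M N => by ext v w; by_cases h : P v w <;> simp [h]
    map_smul' := fun c M => by ext v w; by_cases h : P v w <;> simp [h] }

open Classical in
theorem Matrix.mask_apply {V : Type*} (P : V → V → Prop) (M : Matrix V V ℝ) (v w : V) :
    mask P M v w = if P v w then M v w else 0 := rfl

namespace MixedGraph

variable {V : Type*} [Fintype V] [DecidableEq V]

theorem transpose_eq_of_mem_model {G : MixedGraph V} {S : Matrix V V ℝ} (hS : S ∈ G.model) :
    Sᵀ = S := by
  obtain ⟨Λ, Ω, -, hΩ, rfl⟩ := hS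
  have hsymm : Ωᵀ = Ω := hΩ.1.isHermitian
  simp [transpose_mul, hsymm, Matrix.mul_assoc]

/-- The model of a complete BAP contains all symmetric matrices close to the identity. -/
theorem eventually_mem_model_of_complete (G : MixedGraph V) (hG : G.IsBAP)
    (hcomplete : ∀ v w : V, v ≠ w → G.adj v w) :
    ∀ᶠ S : Matrix V V ℝ in 𝓝 1, Sᵀ = S → S ∈ G.model := by
  let τ := (transposeLinearEquiv V V ℝ ℝ).toLinearMap
  let L := mask G.D
  let O := mask (fun v w => v = w ∨ G.B v w) ∘ₗ ((1 / 2 : ℝ) • (LinearMap.id + τ))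
  let K := LinearMap.id - τ
  have hDirrefl : ∀ v, ¬ G.D v v := fun v h => hG.1 v (.single h)
  have hLapply : ∀ M, L M = mask G.D M := fun _ => rfl
  have hOapply : ∀ M v w, O M v w =
      mask (fun v w => v = w ∨ G.B v w) ((1 / 2 : ℝ) • (M + Mᵀ)) v w := fun _ _ _ => rfl
  have hKapply : ∀ M, K M = M - Mᵀ := fun _ => rfl
  have hOsymm : ∀ M, (O M)ᵀ = O M := fun M => by
    ext v w
    rw [transpose_apply, hOapply, hOapply, mask_apply, mask_apply]
    by_cases h : v = w ∨ G.B v w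
    · rw [if_pos h, if_pos (h.imp Eq.symm (G.symm v w))]
      simp [add_comm]
    · rw [if_neg h, if_neg (mt (Or.imp Eq.symm (G.symm w v)) h)]
  have hLone : L 1 = 0 := by
    ext v w
    rcases eq_or_ne v w with rfl | h <;> simp [L, mask_apply, *]
  have hOone : O 1 = 1 := by
    ext v w
    rcases eq_or_ne v w with rfl | h
    · simp [hOapply, mask_apply]; norm_num
    · simp [hOapply, mask_apply, h]
  have hinj : ∀ M, L M + (L M)ᵀ + O M + K M = 0 → M = 0 := fun M hM => by
    ext v w
    have hvw := congrFun₂ hM v w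
    have hwv := congrFun₂ hM w v
    simp only [Matrix.add_apply, transpose_apply, hLapply, hOapply, hKapply, mask_apply,
      Matrix.sub_apply, Matrix.smul_apply, Matrix.zero_apply, smul_eq_mul] at hvw hwv ⊢
    rcases eq_or_ne v w with rfl | hne
    · simp [hDirrefl] at hvw
      linarith
    · obtain ⟨h₁, h₂, h₃⟩ := hG.2 v w hne
      rcases (hcomplete v w hne).2 with h | h | h
      · have hD : ¬ G.D w v := fun h' => h₁ ⟨h, h'⟩
        have hB : ¬ G.B v w := fun h' => h₂ ⟨h, h'⟩
        simp [h, hD, hB, mt (G.symm w v) hB, hne, hne.symm] at hvw hwv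
        linarith
      · have hD : ¬ G.D v w := fun h' => h₁ ⟨h', h⟩
        have hB : ¬ G.B v w := fun h' => h₃ ⟨h, h'⟩
        simp [h, hD, hB, mt (G.symm w v) hB, hne, hne.symm] at hvw hwv
        linarith
      · have hD : ¬ G.D v w := fun h' => h₂ ⟨h', h⟩
        have hD' : ¬ G.D w v := fun h' => h₃ ⟨h', h⟩
        simp [h, G.symm v w h, hD, hD'] at hvw hwv
        linarith
  have hmap := map_nhds_transpose_inv_mul_mul_inv L O K 1 hLone hOone hinj
  have hKone : K 1 = 0 := by simp [hKapply]
  have hOcont : Tendsto O (𝓝 1) (𝓝 1) := by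
    simpa [hOone] using (LinearMap.continuous_of_finiteDimensional O).tendsto 1
  have hpos : ∀ᶠ M in 𝓝 1, (O M).PosDef :=
    (hOcont.eventually eventually_posDef_nhds_one).mono fun M hM => hM (hOsymm M)
  rw [hKone, add_zero] at hmap
  rw [← hmap, eventually_map]
  filter_upwards [hpos] with M hM hsymm
  have hMsymm : K M = 0 := by
    have hKskew : (K M)ᵀ = -K M := by simp [hKapply]
    simp only [transpose_add, transpose_mul, transpose_transpose, hOsymm, hKskew,
      ← Matrix.mul_assoc, add_right_inj] at hsymm
    ext v w
    have hvw := congrFun₂ hsymm v w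
    simp only [Matrix.neg_apply, Matrix.zero_apply] at hvw ⊢
    linarith
  refine ⟨L M, O M, fun v w h => by simp [hLapply, mask_apply, h], ⟨hM, fun v w hne hB _ => ?_⟩,
    by rw [hMsymm, add_zero]⟩
  simp [hOapply, mask_apply, hne, hB]

end MixedGraph

/-- A polynomial vanishing near the base point of an affine line vanishes on the whole line. -/
theorem MvPolynomial.eval_add_eq_zero_of_eventually {σ : Type*} (p : MvPolynomial σ ℝ)
    (a b : σ → ℝ) (h : ∀ᶠ t : ℝ in 𝓝 0, eval (fun i => a i + t * b i) p = 0) :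
    eval (fun i => a i + b i) p = 0 := by
  let q : Polynomial ℝ := aeval (fun i => Polynomial.C (a i) + Polynomial.X * Polynomial.C (b i)) p
  have hq : ∀ t, q.eval t = eval (fun i => a i + t * b i) p := fun t => by
    change Polynomial.eval t (aeval _ p) = _
    rw [← Polynomial.coe_aeval_eq_eval, comp_aeval_apply, ← coe_aeval_eq_eval]
    simp [mul_comm t]
  have hzero : q = 0 := q.eq_zero_of_infinite_isRoot
    (infinite_of_mem_nhds 0 (h.mono fun t ht => (hq t).trans ht))
  simpa [hzero] using (hq 1).symm

/-- Example 3: A complete BAP imposes no algebraic constraints: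
its algebraic model is the set of all symmetric real matrices. -/
theorem algModel_eq_symmetric_of_complete
    {V : Type*} [Fintype V] [DecidableEq V]
    (G : MixedGraph V) (hG : G.IsBAP)
    (hcomplete : ∀ v w : V, v ≠ w → G.adj v w) :
    G.algModel = {S : Matrix V V ℝ | Sᵀ = S} := by
  ext S
  refine ⟨fun hS => ?_, fun hS p hp => ?_⟩
  · ext v w
    have hvw := hS (MvPolynomial.X (w, v) - MvPolynomial.X (v, w)) fun T hT => by
      simpa [sub_eq_zero] using congrFun₂ (MixedGraph.transpose_eq_of_mem_model hT) v w
    simpa [sub_eq_zero] using hvw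
  · have hline : Tendsto (fun t : ℝ => 1 + t • (S - 1)) (𝓝 0) (𝓝 1) := by
      have hcont : Continuous fun t : ℝ => 1 + t • (S - 1) := by fun_prop
      simpa using hcont.tendsto 0
    have hsymm : Sᵀ = S := hS
    have hev := hline.eventually (G.eventually_mem_model_of_complete hG hcomplete)
    have hzero := p.eval_add_eq_zero_of_eventually (fun e => (1 : Matrix V V ℝ) e.1 e.2)
      (fun e => (S - 1) e.1 e.2) (hev.mono fun t ht => by
        simpa using hp _ (ht (by simp [hsymm])))
    simpa using hzero
end

section
/- Let G' be the mixed graph on Fin 4 (vertices a = 0, b = 1, c = 2, d = 3) with directed edges a→b, b→c, c→d and bidirected edges a↔c, b↔d, a↔d; G' is a bow-free acyclic path diagram. Let Σ = !![1, 3/4, 2/9, 1/2; 3/4, 1, 3/4, 1/2; 2/9, 3/4, 1, 1/2; 1/2, 1/2, 1/2, 1] : Matrix (Fin 4) (Fin 4) ℝ. Then Σ is positive definite, but Σ ∉ M(G'): there exist no G'-compatible matrices Λ', Ω' with Σ = ((1 − Λ')⁻¹)ᵀ * Ω' * (1 − Λ')⁻¹. (The claim of Example 3, establishing that the two complete BAPs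 of Figure 2 are not distributionally equivalent.) -/
open Matrix

/-- The graph `G'` of Example 3: vertices `a = 0, b = 1, c = 2, d = 3`,
directed edges `a→b, b→c, c→d`, bidirected edges `a↔c, b↔d, a↔d`. -/
def exampleGraph3 : MixedGraph (Fin 4) where
  D v w := (v = 0 ∧ w = 1) ∨ (v = 1 ∧ w = 2) ∨ (v = 2 ∧ w = 3)
  B v w := (v = 0 ∧ w = 2) ∨ (v = 2 ∧ w = 0) ∨ (v = 1 ∧ w = 3) ∨ (v = 3 ∧ w = 1) ∨
           (v = 0 ∧ w = 3) ∨ (v = 3 ∧ w = 0)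
  symm := by decide
  irrefl := by decide

/-- Directed edges of `exampleGraph3` increase the vertex label. -/
lemma exampleGraph3_lt_of_D {v w : Fin 4} (h : exampleGraph3.D v w) : v < w := by
  rcases h with ⟨rfl, rfl⟩ | ⟨rfl, rfl⟩ | ⟨rfl, rfl⟩ <;> decide

lemma exampleGraph3_acyclic : exampleGraph3.Acyclic := by
  intro v hv
  have lt_of_transGen : ∀ w, Relation.TransGen exampleGraph3.D v w → v < w := by
    intro w hw
    induction hw with
    | single h => exact exampleGraph3_lt_of_D h
    | tail _ h ih => exact ih.trans (exampleGraph3_lt_of_D h)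
  exact lt_irrefl v (lt_of_transGen v hv)

lemma exampleGraph3_simple : exampleGraph3.Simple := by
  unfold MixedGraph.Simple exampleGraph3
  decide

/-- A compatible `Λ` is strictly upper triangular, so `1 - Λ` has determinant one. -/
lemma exampleGraph3_det_one_sub {Λ : Matrix (Fin 4) (Fin 4) ℝ}
    (hΛ : exampleGraph3.LamCompat Λ) : (1 - Λ).det = 1 := by
  have hzero : ∀ i j : Fin 4, j ≤ i → Λ i j = 0 := fun i j hij =>
    hΛ i j fun h => (exampleGraph3_lt_of_D h).not_ge hij
  rw [Matrix.det_of_isUpperTriangular]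
  · simp [hzero _ _ le_rfl]
  · intro i j hij
    have hij : j < i := hij
    simp [Matrix.one_apply_ne hij.ne', hzero i j hij.le]

/-- On the model, `Ω` is recovered from the covariance matrix and `Λ`. -/
lemma transpose_mul_mul_eq_of_eq_inv {n : Type*} [Fintype n] [DecidableEq n]
    {A S Ω : Matrix n n ℝ} (hA : IsUnit A.det) (hS : S = (A⁻¹)ᵀ * Ω * A⁻¹) :
    Aᵀ * S * A = Ω := by
  calc Aᵀ * S * A = (A⁻¹ * A)ᵀ * Ω * (A⁻¹ * A) := by
        rw [hS, Matrix.transpose_mul]; simp only [Matrix.mul_assoc]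
    _ = Ω := by simp [Matrix.nonsing_inv_mul A hA]

/-- The matrix of Example 3 is positive definite, by completing squares. -/
lemma example3_posDef :
    (!![1, 3/4, 2/9, 1/2;
        3/4, 1, 3/4, 1/2;
        2/9, 3/4, 1, 1/2;
        1/2, 1/2, 1/2, 1] : Matrix (Fin 4) (Fin 4) ℝ).PosDef := by
  rw [Matrix.posDef_iff_dotProduct_mulVec]
  refine ⟨?_, fun x hx => ?_⟩
  · ext i j
    fin_cases i <;> fin_cases j <;> simp
  · have hform : star x ⬝ᵥ (!![1, 3/4, 2/9, 1/2;
        3/4, 1, 3/4, 1/2;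
        2/9, 3/4, 1, 1/2;
        1/2, 1/2, 1/2, 1] *ᵥ x) =
        (x 0 + 3/4 * x 1 + 2/9 * x 2 + 1/2 * x 3) ^ 2
          + 7/16 * (x 1 + 4/3 * x 2 + 2/7 * x 3) ^ 2
          + 14/81 * (x 2 + 9/7 * x 3) ^ 2 + 3/7 * x 3 ^ 2 := by
      simp [dotProduct, Matrix.mulVec, Fin.sum_univ_four]
      ring
    rw [hform]
    by_contra! hle
    have h0 := sq_nonneg (x 0 + 3/4 * x 1 + 2/9 * x 2 + 1/2 * x 3)
    have h1 := sq_nonneg (x 1 + 4/3 * x 2 + 2/7 * x 3)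
    have h2 := sq_nonneg (x 2 + 9/7 * x 3)
    have h3 := sq_nonneg (x 3)
    have e3 : x 3 = 0 := pow_eq_zero_iff two_ne_zero |>.mp (by linarith)
    have e2 : x 2 + 9/7 * x 3 = 0 := pow_eq_zero_iff two_ne_zero |>.mp (by linarith)
    have e1 : x 1 + 4/3 * x 2 + 2/7 * x 3 = 0 :=
      pow_eq_zero_iff two_ne_zero |>.mp (by linarith)
    have e0 : x 0 + 3/4 * x 1 + 2/9 * x 2 + 1/2 * x 3 = 0 :=
      pow_eq_zero_iff two_ne_zero |>.mp (by linarith)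
    refine hx (funext fun i => ?_)
    fin_cases i <;> simp <;> linarith

/-- The vanishing of `Ω` at `(0, 1)` and `(1, 2)` forces `Λ 0 1 = 3/4` and `Λ 1 2 = 4/3`;
then `Ω 2 3 = -1/6` whatever `Λ 2 3` is. -/
lemma example3_not_mem_model :
    (!![1, 3/4, 2/9, 1/2;
        3/4, 1, 3/4, 1/2;
        2/9, 3/4, 1, 1/2;
        1/2, 1/2, 1/2, 1] : Matrix (Fin 4) (Fin 4) ℝ) ∉ exampleGraph3.model := by
  rintro ⟨Λ, Ω, hΛ, ⟨-, hΩ⟩, hS⟩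
  have hrec := transpose_mul_mul_eq_of_eq_inv
    (by rw [exampleGraph3_det_one_sub hΛ]; exact isUnit_one) hS
  have hΛform : Λ = !![0, Λ 0 1, 0, 0; 0, 0, Λ 1 2, 0; 0, 0, 0, Λ 2 3; 0, 0, 0, 0] := by
    ext i j
    fin_cases i <;> fin_cases j <;>
      first
      | rfl
      | exact hΛ _ _ (by simp [exampleGraph3])
  have hone : (1 : Matrix (Fin 4) (Fin 4) ℝ) =
      !![1, 0, 0, 0; 0, 1, 0, 0; 0, 0, 1, 0; 0, 0, 0, 1] := by
    ext i j
    fin_cases i <;> fin_cases j <;> simp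
  have h01 : Ω 0 1 = 0 := hΩ 0 1 (by decide) (by simp [exampleGraph3]) (by simp [exampleGraph3])
  have h12 : Ω 1 2 = 0 := hΩ 1 2 (by decide) (by simp [exampleGraph3]) (by simp [exampleGraph3])
  have h23 : Ω 2 3 = 0 := hΩ 2 3 (by decide) (by simp [exampleGraph3]) (by simp [exampleGraph3])
  generalize Λ 0 1 = l at hΛform
  generalize Λ 1 2 = m at hΛform
  generalize Λ 2 3 = k at hΛform
  subst hΛform
  rw [← hrec, hone] at h01 h12 h23
  simp [Matrix.mul_apply, Fin.sum_univ_four] at h01 h12 h23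
  obtain rfl : l = 3/4 := by linarith
  obtain rfl : m = 4/3 := by linarith
  linarith

/-- Example 3: `exampleGraph3` is a BAP, and the given positive
definite matrix `Σ` is not in its model. -/
theorem example3_posDef_not_mem_model :
    exampleGraph3.IsBAP ∧
    (!![1, 3/4, 2/9, 1/2;
        3/4, 1, 3/4, 1/2;
        2/9, 3/4, 1, 1/2;
        1/2, 1/2, 1/2, 1] : Matrix (Fin 4) (Fin 4) ℝ).PosDef ∧
    (!![1, 3/4, 2/9, 1/2;
        3/4, 1, 3/4, 1/2;
        2/9, 3/4, 1, 1/2;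
        1/2, 1/2, 1/2, 1] : Matrix (Fin 4) (Fin 4) ℝ) ∉ exampleGraph3.model := by
  exact ⟨⟨exampleGraph3_acyclic, exampleGraph3_simple⟩, example3_posDef, example3_not_mem_model⟩
end

section
/- Let G be the mixed graph on Fin 5 (vertices a = 0, b = 1, c = 2, d = 3, e = 4) with directed edges a→b, b→c, c→d and bidirected edges a↔c, a↔d (vertex e isolated); G is a bow-free acyclic path diagram. Let Σ = !![1, 3/4, 2/9, 0, 0; 3/4, 1, 3/4, 0, 0; 2/9, 3/4, 1, 0, 0; 0, 0, 0, 1, 1/2; 0, 0, 0, 1/2, 1] : Matrix (Fin 5) (Fin 5) ℝ. Then: (i) Σ is positive definite; (ii) Σ satisfies the six polynomial constraints σ_ae = 0, σ_be = 0, σ_ce = 0, det !![σ_bd, σ_bc; σ_cd, σ_cc] = 0, det !![σ_aa, σ_ab, 0; σ_ba, σ_bb, σ_bd; σ_ca, σ_cb, σ_cd] = 0, and det !![σ_aa, σ_ab, 0; σ_ba, σ_bb, σ_bc; σ_ca, σ_cb, σ_cc] = 0, where σ_xy denotes the (x,y) entry of Σ; yet (iii) Σ ∉ M(G) — indeed every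 element Σ' of M(G) satisfies Σ'_{d e} = 0 while Σ_{d e} = 1/2. (The claims of Example 1: the graphically represented ideal of this BAP is not PD-primary.) -/
open Matrix

/-- The graph `G` of Example 1: vertices `a = 0, b = 1, c = 2, d = 3, e = 4`,
directed edges `a→b, b→c, c→d`, bidirected edges `a↔c, a↔d`; vertex `e` isolated. -/
def exampleGraph1 : MixedGraph (Fin 5) where
  D v w := (v = 0 ∧ w = 1) ∨ (v = 1 ∧ w = 2) ∨ (v = 2 ∧ w = 3)
  B v w := (v = 0 ∧ w = 2) ∨ (v = 2 ∧ w = 0) ∨ (v = 0 ∧ w = 3) ∨ (v = 3 ∧ w = 0)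
  symm := by decide
  irrefl := by decide

/-- The matrix `Σ` of Example 1. -/
noncomputable def exampleSigma1 : Matrix (Fin 5) (Fin 5) ℝ :=
  !![1, 3/4, 2/9, 0, 0;
     3/4, 1, 3/4, 0, 0;
     2/9, 3/4, 1, 0, 0;
     0, 0, 0, 1, 1/2;
     0, 0, 0, 1/2, 1]

/-- A nonsingular matrix fixing a vector has an inverse fixing that vector. -/
lemma Matrix.inv_mulVec_eq_self {V : Type*} [Fintype V] [DecidableEq V] {A : Matrix V V ℝ}
    (hA : IsUnit A.det) {x : V → ℝ} (hx : A *ᵥ x = x) : A⁻¹ *ᵥ x = x := by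
  conv_lhs => rw [← hx]
  rw [mulVec_mulVec, nonsing_inv_mul A hA, one_mulVec]

/-- An isolated vertex is uncorrelated with all other vertices in every matrix of the model. -/
lemma MixedGraph.apply_eq_zero_of_mem_model_of_isolated {V : Type*} [Fintype V] [DecidableEq V]
    {G : MixedGraph V} {e : V} (hDl : ∀ v, ¬ G.D e v) (hDr : ∀ v, ¬ G.D v e)
    (hB : ∀ v, ¬ G.B v e) {S : Matrix V V ℝ} (hS : S ∈ G.model) {v : V} (hv : v ≠ e) :
    S v e = 0 := by
  obtain ⟨Λ, Ω, hΛ, ⟨-, hΩ⟩, rfl⟩ := hS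
  by_cases hA : IsUnit (1 - Λ).det
  · have hcol : (1 - Λ) *ᵥ Pi.single e 1 = Pi.single e 1 := by
      ext w
      simp [one_apply, Pi.single_apply, hΛ w e (hDr w)]
    have hrow : (1 - Λ)ᵀ *ᵥ Pi.single e 1 = Pi.single e 1 := by
      ext w
      simp [one_apply, Pi.single_apply, hΛ e w (hDl w)]
    have hmid : Ω *ᵥ Pi.single e 1 = Ω e e • Pi.single e 1 := by
      ext w
      by_cases hw : w = e
      · subst hw
        simp
      · simp [hw, hΩ w e hw (hB w) fun h => hB w (G.symm _ _ h)]
    have key : (((1 - Λ)⁻¹)ᵀ * Ω * (1 - Λ)⁻¹) *ᵥ Pi.single e 1 = Ω e e • Pi.single e 1 := by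
      rw [← mulVec_mulVec, ← mulVec_mulVec, inv_mulVec_eq_self hA hcol, hmid, mulVec_smul,
        transpose_nonsing_inv, inv_mulVec_eq_self (by rwa [det_transpose]) hrow]
    simpa [hv] using congrFun key v
  · simp [nonsing_inv_apply_not_isUnit _ hA]

lemma exampleGraph1_isBAP : exampleGraph1.IsBAP := by
  constructor
  · intro v hv
    have hlt : ∀ {x y : Fin 5}, Relation.TransGen exampleGraph1.D x y → x < y := by
      intro x y h
      induction h with
      | single h =>
        rcases h with ⟨rfl, rfl⟩ | ⟨rfl, rfl⟩ | ⟨rfl, rfl⟩ <;> decide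
      | tail _ h ih =>
        refine ih.trans ?_
        rcases h with ⟨rfl, rfl⟩ | ⟨rfl, rfl⟩ | ⟨rfl, rfl⟩ <;> decide
    exact lt_irrefl v (hlt hv)
  · unfold MixedGraph.Simple exampleGraph1
    decide

lemma exampleSigma1_posDef : exampleSigma1.PosDef := by
  refine PosDef.of_dotProduct_mulVec_pos ?_ fun x hx => ?_
  · ext i j
    fin_cases i <;> fin_cases j <;> simp [exampleSigma1]
  · have hform : star x ⬝ᵥ exampleSigma1 *ᵥ x =
        (x 0 + 3/4 * x 1 + 2/9 * x 2) ^ 2 + 7/16 * (x 1 + 4/3 * x 2) ^ 2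
          + 14/81 * x 2 ^ 2 + (x 3 + 1/2 * x 4) ^ 2 + 3/4 * x 4 ^ 2 := by
      simp [exampleSigma1, dotProduct, mulVec, Fin.sum_univ_five]
      ring
    rw [hform]
    by_contra! hle
    have h4 : x 4 = 0 := by nlinarith
    have h3 : x 3 = 0 := by nlinarith
    have h2 : x 2 = 0 := by nlinarith
    have h1 : x 1 = 0 := by nlinarith
    have h0 : x 0 = 0 := by nlinarith
    exact hx (by ext i; fin_cases i <;> assumption)

/-- Example 1: `exampleGraph1` is a BAP; `exampleSigma1` is positive
definite and satisfies the six graphically represented constraints, yet it is not in the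
model: every member of the model has vanishing `(d, e)` entry while `Σ` has `1/2` there. -/
theorem example1_not_PD_primary :
    exampleGraph1.IsBAP ∧
    exampleSigma1.PosDef ∧
    (exampleSigma1 0 4 = 0 ∧ exampleSigma1 1 4 = 0 ∧ exampleSigma1 2 4 = 0 ∧
      (!![exampleSigma1 1 3, exampleSigma1 1 2;
          exampleSigma1 2 3, exampleSigma1 2 2] : Matrix (Fin 2) (Fin 2) ℝ).det = 0 ∧
      (!![exampleSigma1 0 0, exampleSigma1 0 1, 0;
          exampleSigma1 1 0, exampleSigma1 1 1, exampleSigma1 1 3;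
          exampleSigma1 2 0, exampleSigma1 2 1, exampleSigma1 2 3] :
            Matrix (Fin 3) (Fin 3) ℝ).det = 0 ∧
      (!![exampleSigma1 0 0, exampleSigma1 0 1, 0;
          exampleSigma1 1 0, exampleSigma1 1 1, exampleSigma1 1 2;
          exampleSigma1 2 0, exampleSigma1 2 1, exampleSigma1 2 2] :
            Matrix (Fin 3) (Fin 3) ℝ).det = 0) ∧
    ((∀ S ∈ exampleGraph1.model, S 3 4 = 0) ∧ exampleSigma1 3 4 = 1/2 ∧
      exampleSigma1 ∉ exampleGraph1.model) := by
  have hde : exampleSigma1 3 4 = 1/2 := by simp [exampleSigma1]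
  have hmodel : ∀ S ∈ exampleGraph1.model, S 3 4 = 0 := fun S hS =>
    MixedGraph.apply_eq_zero_of_mem_model_of_isolated (e := 4)
      (by unfold exampleGraph1; decide) (by unfold exampleGraph1; decide)
      (by unfold exampleGraph1; decide) hS (by decide)
  refine ⟨exampleGraph1_isBAP, exampleSigma1_posDef, ⟨?_, ?_, ?_, ?_, ?_, ?_⟩, hmodel, hde,
    fun hS => ?_⟩
  · simp [exampleSigma1]
  · simp [exampleSigma1]
  · simp [exampleSigma1]
  · simp [exampleSigma1, det_fin_two]
  · simp [exampleSigma1, det_fin_three]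
  · simp [exampleSigma1, det_fin_three]
    norm_num
  · have := hmodel _ hS
    norm_num [hde] at this
end
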